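/- Pointwise lower bound for the v-component in the Duhamel formulation of the quadratically coupled system (inequality (7.4) of the paper). Let d₁, d₂ > 0, c₁, c₂ ∈ ℝ, T ∈ (0,∞], ν₀, α > 0, and set d_m = min(d₁, d₂). Let u₀, v₀ : ℝ → [0,∞) be measurable with u₀(y) ≥ ν₀ e^{−αy²} for all y ∈ ℝ, and let u, v : ℝ × [0,T) → [0,∞) be measurable functions satisfying, for all x ∈ ℝ and t ∈ (0,T), u(x,t) = ∫_ℝ θ_{d₁,c₁}(x−y,t) u₀(y) dy + ∫_0^t ∫_ℝ θ_{d₁,c₁}(x−y,t−s) v(y,s)² dy ds and v(x,t) = ∫_ℝ θ_{d₂,c₂}(x−y,t) v₀(y) dy + ∫_0^t ∫_ℝ θ_{d₂,c₂}(x−y,t−s) u(y,s)² dy ds. Then for all x ∈ ℝ and t ∈ (0,T): v(x,t) ≥ ( ν₀² d_m^{3/2} / ( d₁ √(2 d₂) ) ) ∫_0^t exp( −2α(x + c₂t + s(c₁−c₂))²/(1 + 4α d_m t) ) / √( (1 + 4α d_m s)(1 + 4α d_m t) ) ds. -/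

import Mathlib

open MeasureTheory Set

noncomputable section

/-- The drifting heat kernel `θ_{d,c}(x,t) = e^{−(x+ct)²/(4dt)}/√(4πdt)`. -/
def driftKernel (d c x t : ℝ) : ℝ :=
  Real.exp (-(x + c * t) ^ 2 / (4 * d * t)) / Real.sqrt (4 * Real.pi * d * t)

/-!
A kernel with diffusivity `d ≥ m` dominates `√(m/d)` times the kernel with diffusivity `m` and the
same drift, so every convolution below may be estimated with the single diffusivity
`m = min d₁ d₂`, for which Gaussians evolve explicitly. Dropping the nonnegative coupling term,
`u(·, s)` lies above an explicit Gaussian; its square is again a Gaussian, and restarting the heat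
flow from that square at time `s` bounds the integrand of the Duhamel term of `v` from below.
-/

/-- The heat flow with diffusivity `d`, at time `t`, of the Gaussian `z ↦ e^{−βz²}`. A drift and a
translation of the initial Gaussian only shift the argument `z`, hence are not parameters. -/
def gaussianFlow (β d t z : ℝ) : ℝ :=
  Real.exp (-(β * z ^ 2) / (1 + 4 * β * d * t)) / Real.sqrt (1 + 4 * β * d * t)

lemma gaussianFlow_sq {β d t : ℝ} (h : 0 < 1 + 4 * β * d * t) (z : ℝ) :
    gaussianFlow β d t z ^ 2 =
      Real.exp (-(2 * β / (1 + 4 * β * d * t) * z ^ 2)) / (1 + 4 * β * d * t) := by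
  rw [gaussianFlow, div_pow, Real.sq_sqrt h.le, ← Real.exp_nat_mul]
  congr 2
  push_cast
  ring

lemma gaussianFlow_nonneg (β d t z : ℝ) : 0 ≤ gaussianFlow β d t z := by
  unfold gaussianFlow
  positivity

lemma driftKernel_nonneg (d c x t : ℝ) : 0 ≤ driftKernel d c x t := by
  unfold driftKernel
  positivity

lemma integral_driftKernel_mul_nonneg (d c x t : ℝ) {g : ℝ → ℝ} (hg : ∀ y, 0 ≤ g y) :
    0 ≤ ∫ y : ℝ, driftKernel d c (x - y) t * g y :=
  integral_nonneg fun y => mul_nonneg (driftKernel_nonneg d c (x - y) t) (hg y)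

lemma integral_integral_driftKernel_mul_nonneg (d c x t : ℝ) {S : Set ℝ} {g : ℝ → ℝ → ℝ}
    (hg : ∀ y s, 0 ≤ g y s) :
    0 ≤ ∫ s in S, ∫ y : ℝ, driftKernel d c (x - y) (t - s) * g y s :=
  integral_nonneg fun s => integral_driftKernel_mul_nonneg d c x (t - s) fun y => hg y s

lemma driftKernel_mul_exp_eq {d t β : ℝ} (hd : 0 < d) (ht : 0 < t) (hβ : 0 ≤ β) (c x b y : ℝ) :
    driftKernel d c (x - y) t * Real.exp (-(β * (y + b) ^ 2)) =
      Real.exp (-(β * (x + c * t + b) ^ 2) / (1 + 4 * β * d * t)) /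
          Real.sqrt (4 * Real.pi * d * t) *
        Real.exp (-((1 + 4 * β * d * t) / (4 * d * t)) *
          (y - (x + c * t - 4 * β * d * t * b) / (1 + 4 * β * d * t)) ^ 2) := by
  have hspread : 0 < 1 + 4 * β * d * t := by positivity
  rw [driftKernel, div_mul_eq_mul_div, div_mul_eq_mul_div, ← Real.exp_add, ← Real.exp_add]
  congr 2
  field_simp [hspread.ne']
  ring

lemma integral_driftKernel_mul_exp {d t β : ℝ} (hd : 0 < d) (ht : 0 < t) (hβ : 0 ≤ β)
    (c x b : ℝ) :
    ∫ y : ℝ, driftKernel d c (x - y) t * Real.exp (-(β * (y + b) ^ 2)) =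
      gaussianFlow β d t (x + c * t + b) := by
  have hspread : 0 < 1 + 4 * β * d * t := by positivity
  have hsqrt : Real.sqrt (Real.pi / ((1 + 4 * β * d * t) / (4 * d * t))) =
      Real.sqrt (4 * Real.pi * d * t) / Real.sqrt (1 + 4 * β * d * t) := by
    rw [← Real.sqrt_div (by positivity)]
    congr 1
    field_simp [hspread.ne']
  simp_rw [driftKernel_mul_exp_eq hd ht hβ]
  rw [integral_const_mul, integral_sub_right_eq_self
      (fun y => Real.exp (-((1 + 4 * β * d * t) / (4 * d * t)) * y ^ 2)),
    integral_gaussian, hsqrt, gaussianFlow]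
  field_simp

lemma sqrt_div_mul_driftKernel_le {m d t : ℝ} (hm : 0 < m) (hmd : m ≤ d) (ht : 0 < t)
    (c x : ℝ) : Real.sqrt (m / d) * driftKernel m c x t ≤ driftKernel d c x t := by
  have hd : 0 < d := hm.trans_le hmd
  have hsqrt : Real.sqrt (m / d) =
      Real.sqrt (4 * Real.pi * m * t) / Real.sqrt (4 * Real.pi * d * t) := by
    rw [← Real.sqrt_div (by positivity)]
    congr 1
    field_simp
  calc Real.sqrt (m / d) * driftKernel m c x t
      = Real.exp (-(x + c * t) ^ 2 / (4 * m * t)) / Real.sqrt (4 * Real.pi * d * t) := by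
        rw [hsqrt, driftKernel]
        field_simp
    _ ≤ driftKernel d c x t := by
        rw [driftKernel, neg_div, neg_div]
        gcongr

lemma mul_gaussianFlow_le_integral_driftKernel_mul {m d t β K : ℝ} (hm : 0 < m) (hmd : m ≤ d)
    (ht : 0 < t) (hβ : 0 ≤ β) (hK : 0 ≤ K) {c x b : ℝ} {g : ℝ → ℝ}
    (hgint : Integrable fun y : ℝ => driftKernel d c (x - y) t * g y)
    (hg : ∀ y, K * Real.exp (-(β * (y + b) ^ 2)) ≤ g y) :
    K * Real.sqrt (m / d) * gaussianFlow β m t (x + c * t + b) ≤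
      ∫ y : ℝ, driftKernel d c (x - y) t * g y := by
  rw [← integral_driftKernel_mul_exp hm ht hβ, ← integral_const_mul]
  refine integral_mono_of_nonneg (.of_forall fun y => ?_) hgint (.of_forall fun y => ?_)
  · have := driftKernel_nonneg m c (x - y) t
    positivity
  · calc K * Real.sqrt (m / d) * (driftKernel m c (x - y) t * Real.exp (-(β * (y + b) ^ 2)))
        = Real.sqrt (m / d) * driftKernel m c (x - y) t *
            (K * Real.exp (-(β * (y + b) ^ 2))) := by ring
      _ ≤ driftKernel d c (x - y) t * g y :=
        mul_le_mul (sqrt_div_mul_driftKernel_le hm hmd ht c (x - y)) (hg y) (by positivity)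
          (driftKernel_nonneg d c (x - y) t)

lemma mul_exp_le_sq_of_integral_driftKernel_mul_le {m d t a ν : ℝ} (hm : 0 < m) (hmd : m ≤ d)
    (ht : 0 < t) (ha : 0 ≤ a) (hν : 0 ≤ ν) {c x w : ℝ} {g : ℝ → ℝ}
    (hgint : Integrable fun y : ℝ => driftKernel d c (x - y) t * g y)
    (hg : ∀ y, ν * Real.exp (-(a * y ^ 2)) ≤ g y)
    (hw : ∫ y : ℝ, driftKernel d c (x - y) t * g y ≤ w) :
    ν ^ 2 * (m / d) / (1 + 4 * a * m * t) *
      Real.exp (-(2 * a / (1 + 4 * a * m * t) * (x + c * t) ^ 2)) ≤ w ^ 2 := by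
  have hd : 0 < d := hm.trans_le hmd
  have hspread : 0 < 1 + 4 * a * m * t := by positivity
  have hflow : ν * Real.sqrt (m / d) * gaussianFlow a m t (x + c * t) ≤ w := by
    simpa only [add_zero] using
      (mul_gaussianFlow_le_integral_driftKernel_mul hm hmd ht ha hν (b := 0) hgint
        (by simpa only [add_zero] using hg)).trans hw
  have hflow_nonneg := gaussianFlow_nonneg a m t (x + c * t)
  calc ν ^ 2 * (m / d) / (1 + 4 * a * m * t) *
        Real.exp (-(2 * a / (1 + 4 * a * m * t) * (x + c * t) ^ 2))
      = (ν * Real.sqrt (m / d) * gaussianFlow a m t (x + c * t)) ^ 2 := by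
        rw [mul_pow, mul_pow, Real.sq_sqrt (by positivity), gaussianFlow_sq hspread]
        ring
    _ ≤ w ^ 2 := pow_le_pow_left₀ (by positivity) hflow 2

-- The restarted flow has spread `(1 + 4am(2t − s)) / (1 + 4ams)`, and `1 + 4am(2t − s)` lies
-- between `1 + 4amt` (used in the exponent) and `2(1 + 4amt)` (used in the prefactor).
lemma exp_div_sqrt_le_gaussianFlow_restart {a m s t : ℝ} (ha : 0 ≤ a) (hm : 0 ≤ m)
    (hs : 0 ≤ s) (hst : s ≤ t) (z : ℝ) :
    Real.exp (-(2 * a * z ^ 2) / (1 + 4 * a * m * t)) / Real.sqrt (2 * (1 + 4 * a * m * t)) ≤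
      gaussianFlow (2 * a / (1 + 4 * a * m * s)) m (t - s) z / Real.sqrt (1 + 4 * a * m * s) := by
  have ht : 0 ≤ t := hs.trans hst
  have hP : 0 < 1 + 4 * a * m * s := by positivity
  have hQ : 0 < 1 + 4 * a * m * t := by positivity
  have hQR : 1 + 4 * a * m * t ≤ 1 + 4 * a * m * (2 * t - s) := by
    gcongr
    linarith
  have hR : 0 < 1 + 4 * a * m * (2 * t - s) := hQ.trans_le hQR
  have hRQ : 1 + 4 * a * m * (2 * t - s) ≤ 2 * (1 + 4 * a * m * t) := by
    linarith
  have hspread : 1 + 4 * (2 * a / (1 + 4 * a * m * s)) * m * (t - s) =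
      (1 + 4 * a * m * (2 * t - s)) / (1 + 4 * a * m * s) := by
    field_simp
    ring
  calc Real.exp (-(2 * a * z ^ 2) / (1 + 4 * a * m * t)) / Real.sqrt (2 * (1 + 4 * a * m * t))
      ≤ Real.exp (-(2 * a * z ^ 2) / (1 + 4 * a * m * (2 * t - s))) /
          Real.sqrt (1 + 4 * a * m * (2 * t - s)) := by
        rw [neg_div, neg_div]
        gcongr
    _ = gaussianFlow (2 * a / (1 + 4 * a * m * s)) m (t - s) z /
          Real.sqrt (1 + 4 * a * m * s) := by
        rw [gaussianFlow, hspread, Real.sqrt_div hR.le, div_mul_eq_mul_div, ← neg_div,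
          div_div_div_cancel_right₀ hP.ne']
        field_simp

lemma rpow_three_halves_div_mul_eq {m d₂ P : ℝ} (hm : 0 ≤ m) (hP : 0 ≤ P)
    (ν d₁ E Q : ℝ) :
    ν ^ 2 * m ^ ((3 : ℝ) / 2) / (d₁ * Real.sqrt (2 * d₂)) * (E / Real.sqrt (P * Q)) =
      ν ^ 2 * (m / d₁) * Real.sqrt (m / d₂) / Real.sqrt P * (E / Real.sqrt (2 * Q)) := by
  have hrpow : m ^ ((3 : ℝ) / 2) = m * Real.sqrt m := by
    rw [Real.sqrt_eq_rpow, ← Real.rpow_one_add' hm (by norm_num)]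
    norm_num
  rw [hrpow, Real.sqrt_mul zero_le_two, Real.sqrt_mul hP, Real.sqrt_mul zero_le_two,
    Real.sqrt_div hm]
  ring

lemma mul_exp_div_sqrt_le_integral_driftKernel_mul_sq {m d₁ d₂ a ν s t : ℝ} (hm : 0 < m)
    (hm₁ : m ≤ d₁) (hm₂ : m ≤ d₂) (ha : 0 ≤ a) (hν : 0 ≤ ν) (hs : 0 < s) (hst : s < t)
    {c₁ c₂ x : ℝ} {u₀ w : ℝ → ℝ} (hu₀ : ∀ y, ν * Real.exp (-(a * y ^ 2)) ≤ u₀ y)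
    (hu₀int : ∀ y, Integrable fun z : ℝ => driftKernel d₁ c₁ (y - z) s * u₀ z)
    (hw : ∀ y, ∫ z : ℝ, driftKernel d₁ c₁ (y - z) s * u₀ z ≤ w y)
    (hwint : Integrable fun y : ℝ => driftKernel d₂ c₂ (x - y) (t - s) * w y ^ 2) :
    ν ^ 2 * m ^ ((3 : ℝ) / 2) / (d₁ * Real.sqrt (2 * d₂)) *
        (Real.exp (-(2 * a * (x + c₂ * t + s * (c₁ - c₂)) ^ 2) / (1 + 4 * a * m * t)) /
          Real.sqrt ((1 + 4 * a * m * s) * (1 + 4 * a * m * t))) ≤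
      ∫ y : ℝ, driftKernel d₂ c₂ (x - y) (t - s) * w y ^ 2 := by
  have hd₁ : 0 < d₁ := hm.trans_le hm₁
  have hP : 0 < 1 + 4 * a * m * s := by positivity
  have hrestart := mul_gaussianFlow_le_integral_driftKernel_mul hm hm₂ (sub_pos.2 hst)
    (by positivity) (by positivity) hwint fun y =>
      mul_exp_le_sq_of_integral_driftKernel_mul_le hm hm₁ hs ha hν (hu₀int y) hu₀ (hw y)
  have hshift : x + c₂ * (t - s) + c₁ * s = x + c₂ * t + s * (c₁ - c₂) := by ring
  rw [hshift] at hrestart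
  refine le_trans ?_ hrestart
  rw [rpow_three_halves_div_mul_eq hm.le hP.le]
  set z := x + c₂ * t + s * (c₁ - c₂)
  calc ν ^ 2 * (m / d₁) * Real.sqrt (m / d₂) / Real.sqrt (1 + 4 * a * m * s) *
        (Real.exp (-(2 * a * z ^ 2) / (1 + 4 * a * m * t)) /
          Real.sqrt (2 * (1 + 4 * a * m * t)))
      ≤ ν ^ 2 * (m / d₁) * Real.sqrt (m / d₂) / Real.sqrt (1 + 4 * a * m * s) *
          (gaussianFlow (2 * a / (1 + 4 * a * m * s)) m (t - s) z /
            Real.sqrt (1 + 4 * a * m * s)) :=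
        mul_le_mul_of_nonneg_left
          (exp_div_sqrt_le_gaussianFlow_restart ha hm.le hs.le hst.le z) (by positivity)
    _ = ν ^ 2 * (m / d₁) / (1 + 4 * a * m * s) * Real.sqrt (m / d₂) *
          gaussianFlow (2 * a / (1 + 4 * a * m * s)) m (t - s) z := by
        rw [div_mul_div_comm, Real.mul_self_sqrt hP.le]
        ring

lemma setIntegral_le_setIntegral_integral {α β : Type*} [MeasurableSpace α] [MeasurableSpace β]
    {μ : Measure α} {ν : Measure β} [SFinite μ] [SFinite ν] {S : Set α} (hS : MeasurableSet S)
    {f : α → ℝ} {F : α × β → ℝ} (hf : ∀ s ∈ S, 0 ≤ f s)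
    (hF : IntegrableOn F (S ×ˢ univ) (μ.prod ν))
    (hfF : ∀ s ∈ S, Integrable (fun y => F (s, y)) ν → f s ≤ ∫ y, F (s, y) ∂ν) :
    ∫ s in S, f s ∂μ ≤ ∫ s in S, ∫ y, F (s, y) ∂ν ∂μ := by
  rw [IntegrableOn, ← Measure.prod_restrict, Measure.restrict_univ] at hF
  refine integral_mono_of_nonneg ?_ hF.integral_prod_left ?_
  · filter_upwards [ae_restrict_mem hS] with s hs using hf s hs
  · filter_upwards [hF.prod_right_ae, ae_restrict_mem hS] with s hint hs using hfF s hs hint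

theorem duhamel_lower_bound_v_component_general
    {d₁ d₂ c₁ c₂ ν₀ a : ℝ} (hd₁ : 0 < d₁) (hd₂ : 0 < d₂) (hν₀ : 0 ≤ ν₀) (ha : 0 ≤ a)
    {T : ENNReal} {u₀ : ℝ → ℝ} (hu₀lb : ∀ y : ℝ, ν₀ * Real.exp (-(a * y ^ 2)) ≤ u₀ y)
    {u v : ℝ → ℝ → ℝ}
    (hu₀int : ∀ x t : ℝ, 0 < t → ENNReal.ofReal t < T →
      Integrable (fun y : ℝ => driftKernel d₁ c₁ (x - y) t * u₀ y))
    (huint : ∀ x t : ℝ, 0 < t → ENNReal.ofReal t < T →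
      IntegrableOn (fun p : ℝ × ℝ =>
        driftKernel d₂ c₂ (x - p.2) (t - p.1) * (u p.2 p.1) ^ 2)
        (Set.Ioo (0 : ℝ) t ×ˢ Set.univ))
    (hu : ∀ x t : ℝ, 0 < t → ENNReal.ofReal t < T →
      ∫ y : ℝ, driftKernel d₁ c₁ (x - y) t * u₀ y ≤ u x t)
    (hv : ∀ x t : ℝ, 0 < t → ENNReal.ofReal t < T →
      ∫ s in Set.Ioo (0 : ℝ) t, ∫ y : ℝ,
        driftKernel d₂ c₂ (x - y) (t - s) * (u y s) ^ 2 ≤ v x t)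
    (x t : ℝ) (ht : 0 < t) (htT : ENNReal.ofReal t < T) :
    ν₀ ^ 2 * min d₁ d₂ ^ ((3 : ℝ) / 2) / (d₁ * Real.sqrt (2 * d₂)) *
      (∫ s in Set.Ioo (0 : ℝ) t,
        Real.exp (-(2 * a * (x + c₂ * t + s * (c₁ - c₂)) ^ 2) /
            (1 + 4 * a * min d₁ d₂ * t)) /
          Real.sqrt ((1 + 4 * a * min d₁ d₂ * s) * (1 + 4 * a * min d₁ d₂ * t))) ≤
      v x t := by
  have hm : 0 < min d₁ d₂ := lt_min hd₁ hd₂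
  refine le_trans ?_ (hv x t ht htT)
  rw [← integral_const_mul]
  refine setIntegral_le_setIntegral_integral measurableSet_Ioo (fun s _ => by positivity)
    (huint x t ht htT) fun s ⟨hs, hst⟩ hint => ?_
  have hsT : ENNReal.ofReal s < T := (ENNReal.ofReal_le_ofReal hst.le).trans_lt htT
  exact mul_exp_div_sqrt_le_integral_driftKernel_mul_sq hm (min_le_left d₁ d₂)
    (min_le_right d₁ d₂) ha hν₀ hs hst hu₀lb (fun y => hu₀int y s hs hsT)
    (fun y => hu y s hs hsT) hint

/-- Pointwise lower bound for the `v`-component in the Duhamel formulation of the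
quadratically coupled system (inequality (7.4) of the paper). -/
theorem duhamel_lower_bound_v_component
    (d₁ d₂ c₁ c₂ ν₀ a : ℝ) (hd₁ : 0 < d₁) (hd₂ : 0 < d₂)
    (hν₀ : 0 < ν₀) (ha : 0 < a) (T : ENNReal) (hT : 0 < T)
    (u₀ v₀ : ℝ → ℝ) (hu₀m : Measurable u₀) (hv₀m : Measurable v₀)
    (hu₀pos : ∀ y : ℝ, 0 ≤ u₀ y) (hv₀pos : ∀ y : ℝ, 0 ≤ v₀ y)
    (hu₀lb : ∀ y : ℝ, ν₀ * Real.exp (-(a * y ^ 2)) ≤ u₀ y)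
    (u v : ℝ → ℝ → ℝ)
    (hum : Measurable fun p : ℝ × ℝ => u p.1 p.2)
    (hvm : Measurable fun p : ℝ × ℝ => v p.1 p.2)
    (hupos : ∀ x t : ℝ, 0 ≤ t → ENNReal.ofReal t < T → 0 ≤ u x t)
    (hvpos : ∀ x t : ℝ, 0 ≤ t → ENNReal.ofReal t < T → 0 ≤ v x t)
    -- finiteness of all the integrals appearing in the Duhamel formulation
    (hInt₁ : ∀ x t : ℝ, 0 < t → ENNReal.ofReal t < T →
      Integrable (fun y : ℝ => driftKernel d₁ c₁ (x - y) t * u₀ y))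
    (hInt₂ : ∀ x t : ℝ, 0 < t → ENNReal.ofReal t < T →
      Integrable (fun y : ℝ => driftKernel d₂ c₂ (x - y) t * v₀ y))
    (hInt₃ : ∀ x t : ℝ, 0 < t → ENNReal.ofReal t < T →
      IntegrableOn (fun p : ℝ × ℝ =>
        driftKernel d₁ c₁ (x - p.2) (t - p.1) * (v p.2 p.1) ^ 2)
        (Set.Ioo (0 : ℝ) t ×ˢ Set.univ))
    (hInt₄ : ∀ x t : ℝ, 0 < t → ENNReal.ofReal t < T →
      IntegrableOn (fun p : ℝ × ℝ =>
        driftKernel d₂ c₂ (x - p.2) (t - p.1) * (u p.2 p.1) ^ 2)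
        (Set.Ioo (0 : ℝ) t ×ˢ Set.univ))
    -- the Duhamel formulation
    (hDuhU : ∀ x t : ℝ, 0 < t → ENNReal.ofReal t < T →
      u x t = (∫ y : ℝ, driftKernel d₁ c₁ (x - y) t * u₀ y) +
        ∫ s in Set.Ioo (0 : ℝ) t, ∫ y : ℝ,
          driftKernel d₁ c₁ (x - y) (t - s) * (v y s) ^ 2)
    (hDuhV : ∀ x t : ℝ, 0 < t → ENNReal.ofReal t < T →
      v x t = (∫ y : ℝ, driftKernel d₂ c₂ (x - y) t * v₀ y) +
        ∫ s in Set.Ioo (0 : ℝ) t, ∫ y : ℝ,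
          driftKernel d₂ c₂ (x - y) (t - s) * (u y s) ^ 2) :
    ∀ x t : ℝ, 0 < t → ENNReal.ofReal t < T →
      ν₀ ^ 2 * min d₁ d₂ ^ ((3 : ℝ) / 2) / (d₁ * Real.sqrt (2 * d₂)) *
        (∫ s in Set.Ioo (0 : ℝ) t,
          Real.exp (-(2 * a * (x + c₂ * t + s * (c₁ - c₂)) ^ 2) /
              (1 + 4 * a * min d₁ d₂ * t)) /
            Real.sqrt ((1 + 4 * a * min d₁ d₂ * s) * (1 + 4 * a * min d₁ d₂ * t))) ≤
      v x t := by
  exact duhamel_lower_bound_v_component_general hd₁ hd₂ hν₀.le ha.le hu₀lb hInt₁ hInt₄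
    (fun x t ht htT => hDuhU x t ht htT ▸ le_add_of_nonneg_right
      (integral_integral_driftKernel_mul_nonneg d₁ c₁ x t fun y s => sq_nonneg (v y s)))
    (fun x t ht htT => hDuhV x t ht htT ▸ le_add_of_nonneg_left
      (integral_driftKernel_mul_nonneg d₂ c₂ x t hv₀pos))
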